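/- arXiv:1602.01293 — 3 statements merged into one kernel-verified Lean document; each statement's English description precedes it below -/
import Mathlib

section
/- Fix two points x, y ∈ X, an exponent q ∈ (1,∞) with conjugate exponent q' = q/(q−1), and a constant C ∈ (0,∞] (extended real). Then the following are equivalent: (i) for every measurable function f : X → [0,∞], ((Tf)(x))^q ≤ C^q · (T(f^q))(y); (ii) (∫_X (p(x,z)/p(y,z))^{q'} · p(y,z) dν(z))^{1/q'} ≤ C. -/
open MeasureTheory ENNReal

/-- Wang-type Harnack inequality for a positive symmetric conservative kernel is
equivalent to an integrated Harnack inequality (Proposition 4.1). -/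
theorem wang_harnack_iff_integrated_harnack
    {X : Type*} [MeasurableSpace X] (ν : Measure X) [SigmaFinite ν]
    (p : X → X → ℝ) (hp_meas : Measurable (Function.uncurry p))
    (hp_pos : ∀ x y, 0 < p x y)
    (hp_symm : ∀ x y, p x y = p y x)
    (hp_cons : ∀ x, ∫⁻ y, ENNReal.ofReal (p x y) ∂ν = 1)
    (T : (X → ℝ≥0∞) → X → ℝ≥0∞)
    (hT : ∀ f x, T f x = ∫⁻ z, ENNReal.ofReal (p x z) * f z ∂ν)
    (x y : X) (q : ℝ) (hq : 1 < q) (q' : ℝ) (hq' : q' = q / (q - 1))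
    (C : ℝ≥0∞) (hC : 0 < C) :
    (∀ f : X → ℝ≥0∞, Measurable f →
        (T f x) ^ q ≤ C ^ q * T (fun z => (f z) ^ q) y) ↔
      (∫⁻ z, (ENNReal.ofReal (p x z / p y z)) ^ q' * ENNReal.ofReal (p y z) ∂ν)
          ^ (1 / q') ≤ C := by
  have hq0 : 0 < q := by linarith
  have hpq : q.HolderConjugate q' := by
    rw [hq']; exact Real.HolderConjugate.conjExponent hq
  have hq'0 : 0 < q' := hpq.symm.pos
  have hq'1 : 1 < q' := hpq.symm.lt
  have hmul : (q' - 1) * q = q' := by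
    rw [hq']; have : q - 1 ≠ 0 := by linarith
    field_simp; ring
  have hmul2 : q' * (q - 1) = q := by
    rw [hq']; have : q - 1 ≠ 0 := by linarith
    field_simp
  have hmx : ∀ a, Measurable (p a) := fun a => hp_meas.comp measurable_prodMk_left
  set d : X → ℝ≥0∞ := fun z => ENNReal.ofReal (p y z) with hd
  have hdm : Measurable d := (hmx y).ennreal_ofReal
  set h : X → ℝ≥0∞ := fun z => ENNReal.ofReal (p x z / p y z) with hh
  have hhm : Measurable h := ((hmx x).div (hmx y)).ennreal_ofReal
  set μ : Measure X := ν.withDensity d with hμ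
  have hint : ∀ g : X → ℝ≥0∞, Measurable g → ∫⁻ z, g z ∂μ = ∫⁻ z, d z * g z ∂ν := by
    intro g hg
    rw [hμ, lintegral_withDensity_eq_lintegral_mul _ hdm hg]; rfl
  have hμ1 : μ Set.univ = 1 := by
    rw [hμ, withDensity_apply _ MeasurableSet.univ, Measure.restrict_univ]
    exact hp_cons y
  have hdh : ∀ z, d z * h z = ENNReal.ofReal (p x z) := by
    intro z
    simp only [hd, hh]
    rw [← ENNReal.ofReal_mul (hp_pos y z).le, mul_div_cancel₀ _ (hp_pos y z).ne']
  have hTx : ∀ f : X → ℝ≥0∞, Measurable f → T f x = ∫⁻ z, h z * f z ∂μ := by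
    intro f hf
    rw [hT, hint (fun z => h z * f z) (hhm.mul hf)]
    refine lintegral_congr fun z => ?_
    rw [← hdh, mul_assoc]
  have hTy : ∀ f : X → ℝ≥0∞, Measurable f → T (fun z => f z ^ q) y = ∫⁻ z, f z ^ q ∂μ := by
    intro f hf
    rw [hT, hint _ (hf.pow_const q)]
  have hI : ∫⁻ z, (h z) ^ q' * d z ∂ν = ∫⁻ z, h z ^ q' ∂μ := by
    rw [hint _ (hhm.pow_const q')]
    exact lintegral_congr fun z => mul_comm _ _
  change _ ↔ (∫⁻ z, (h z) ^ q' * d z ∂ν) ^ (1 / q') ≤ C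
  rw [hI]
  constructor
  · intro H
    have key : ∀ n : ℕ, ∫⁻ z, (min (h z) n) ^ q' ∂μ ≤ C ^ q' := by
      intro n
      have hkm : Measurable fun z => min (h z) (n : ℝ≥0∞) := hhm.min measurable_const
      set I := ∫⁻ z, (min (h z) n) ^ q' ∂μ with hIdef
      have hfin : I ≠ ⊤ := by
        have : I ≤ ∫⁻ z, (n : ℝ≥0∞) ^ q' ∂μ :=
          lintegral_mono fun z => ENNReal.rpow_le_rpow (min_le_right _ _) hq'0.le
        rw [lintegral_const, hμ1, mul_one] at this
        exact ne_top_of_le_ne_top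
          (ENNReal.rpow_ne_top_of_nonneg hq'0.le (ENNReal.natCast_ne_top n)) this
      by_cases hI0 : I = 0
      · rw [hI0]; exact bot_le
      have h1 := H (fun z => (min (h z) (n : ℝ≥0∞)) ^ (q' - 1)) (hkm.pow_const _)
      rw [hTx _ (hkm.pow_const _), hTy _ (hkm.pow_const _)] at h1
      simp_rw [← ENNReal.rpow_mul, hmul] at h1
      rw [← hIdef] at h1
      have h2 : I ≤ ∫⁻ z, h z * (min (h z) (n : ℝ≥0∞)) ^ (q' - 1) ∂μ := by
        refine lintegral_mono fun z => ?_
        calc (min (h z) (n : ℝ≥0∞)) ^ q'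
            = (min (h z) (n : ℝ≥0∞)) ^ (1 + (q' - 1)) := by congr 1; ring
          _ = min (h z) (n : ℝ≥0∞) * (min (h z) (n : ℝ≥0∞)) ^ (q' - 1) := by
              rw [ENNReal.rpow_add_of_nonneg _ _ zero_le_one (by linarith), ENNReal.rpow_one]
          _ ≤ _ := by gcongr; exact min_le_left _ _
      have h3 : I ^ q ≤ C ^ q * I := (ENNReal.rpow_le_rpow h2 hq0.le).trans h1
      have h4 : I ^ (q - 1) * I ≤ C ^ q * I := by
        refine le_trans (le_of_eq ?_) h3
        conv_lhs => rw [← ENNReal.rpow_one I, ← ENNReal.rpow_mul, one_mul]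
        rw [← ENNReal.rpow_add _ _ hI0 hfin]; congr 1; ring
      have h5 : I ^ (q - 1) ≤ C ^ q := (ENNReal.mul_le_mul_iff_left hI0 hfin).1 h4
      have h7 : C ^ q = (C ^ q') ^ (q - 1) := by rw [← ENNReal.rpow_mul, hmul2]
      rw [h7] at h5
      have hq1 : 0 < q - 1 := by linarith
      exact (ENNReal.rpow_le_rpow_iff hq1).1 h5
    have h6 : ∫⁻ z, h z ^ q' ∂μ ≤ C ^ q' := by
      calc ∫⁻ z, h z ^ q' ∂μ ≤ ∫⁻ z, ⨆ n : ℕ, (min (h z) (n : ℝ≥0∞)) ^ q' ∂μ := by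
            refine lintegral_mono fun z => ?_
            obtain ⟨n, hn⟩ := ENNReal.exists_nat_gt (r := h z) ENNReal.ofReal_ne_top
            refine le_trans (le_of_eq ?_) (le_iSup _ n)
            rw [min_eq_left hn.le]
        _ = ⨆ n : ℕ, ∫⁻ z, (min (h z) (n : ℝ≥0∞)) ^ q' ∂μ := by
            refine lintegral_iSup (fun n => (hhm.min measurable_const).pow_const _) ?_
            intro a b hab z
            refine ENNReal.rpow_le_rpow (min_le_min le_rfl ?_) hq'0.le
            exact_mod_cast hab
        _ ≤ _ := iSup_le key
    calc _ ≤ (C ^ q') ^ (1 / q') := ENNReal.rpow_le_rpow h6 (by positivity)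
      _ = C := by rw [← ENNReal.rpow_mul, mul_one_div_cancel hq'0.ne', ENNReal.rpow_one]
  · intro H f hf
    rw [hTx f hf, hTy f hf]
    have h1 := ENNReal.lintegral_mul_le_Lp_mul_Lq μ hpq.symm hhm.aemeasurable hf.aemeasurable
    have h2 : ∫⁻ z, h z * f z ∂μ ≤ C * (∫⁻ z, f z ^ q ∂μ) ^ (1 / q) :=
      h1.trans (mul_le_mul_left H _)
    calc _ ≤ (C * (∫⁻ z, f z ^ q ∂μ) ^ (1 / q)) ^ q := ENNReal.rpow_le_rpow h2 hq0.le
      _ = _ := by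
        rw [ENNReal.mul_rpow_of_nonneg _ _ hq0.le, ← ENNReal.rpow_mul,
          one_div_mul_cancel hq0.ne', ENNReal.rpow_one]
end

section
/- Fix two points x, y ∈ X and an exponent q ∈ (1,∞) with conjugate exponent q' = q/(q−1). Then, as elements of [0,∞], the supremum over all measurable functions f : X → [0,∞] with 0 < (T(f^q))(y) < ∞ of the quotient (Tf)(x) / ((T(f^q))(y))^{1/q} equals (∫_X (p(x,z)/p(y,z))^{q'} · p(y,z) dν(z))^{1/q'}. -/
open MeasureTheory ENNReal

theorem harnack_aux {X : Type*} [MeasurableSpace X] (μ : Measure X) [IsProbabilityMeasure μ]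
    (h : X → ℝ≥0∞) (hm : Measurable h) (h0 : ∀ z, 0 < h z)
    (q q' : ℝ) (hqq : q.HolderConjugate q') :
    (⨆ (f : X → ℝ≥0∞) (_ : Measurable f)
        (_ : 0 < ∫⁻ z, f z ^ q ∂μ) (_ : ∫⁻ z, f z ^ q ∂μ < ⊤),
          (∫⁻ z, h z * f z ∂μ) / (∫⁻ z, f z ^ q ∂μ) ^ (1 / q)) =
      (∫⁻ z, h z ^ q' ∂μ) ^ (1 / q') := by
  have hq0 : 0 < q := hqq.pos
  have hq0' : 0 < q' := hqq.symm.pos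
  have hsum : 1 / q' + 1 / q = 1 := by
    have := hqq.inv_add_inv_eq_one
    simp only [one_div]; linarith
  apply le_antisymm
  · refine iSup_le fun f => iSup_le fun hf => iSup_le fun hpos => iSup_le fun hfin => ?_
    apply ENNReal.div_le_of_le_mul
    exact ENNReal.lintegral_mul_le_Lp_mul_Lq μ hqq.symm hm.aemeasurable hf.aemeasurable
  · set S := (⨆ (f : X → ℝ≥0∞) (_ : Measurable f)
        (_ : 0 < ∫⁻ z, f z ^ q ∂μ) (_ : ∫⁻ z, f z ^ q ∂μ < ⊤),
          (∫⁻ z, h z * f z ∂μ) / (∫⁻ z, f z ^ q ∂μ) ^ (1 / q)) with hS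
    let g : ℕ → X → ℝ≥0∞ := fun n z => min (h z ^ q') ((n : ℝ≥0∞) + 1)
    have hgm : ∀ n, Measurable (g n) := fun n => (hm.pow_const q').min measurable_const
    have hg0 : ∀ n z, 0 < g n z := fun n z => by
      refine lt_min ?_ (by positivity)
      exact ENNReal.rpow_pos_of_nonneg (h0 z) hq0'.le
    have hgmono : Monotone g := fun m n hmn z => by
      refine min_le_min le_rfl ?_
      gcongr
    have hgsup : ∀ z, ⨆ n, g n z = h z ^ q' := fun z => by
      have : (⨆ n : ℕ, ((n : ℝ≥0∞) + 1)) = ⊤ := by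
        rw [eq_top_iff, ← ENNReal.iSup_natCast]
        exact iSup_mono fun n => le_self_add
      change ⨆ n : ℕ, (h z ^ q') ⊓ ((n : ℝ≥0∞) + 1) = _
      rw [← inf_iSup_eq, this, inf_top_eq]
    have key : ∫⁻ z, h z ^ q' ∂μ = ⨆ n, ∫⁻ z, g n z ∂μ := by
      rw [← lintegral_iSup hgm hgmono]
      simp_rw [hgsup]
    rw [one_div, ENNReal.rpow_inv_le_iff hq0', key]
    refine iSup_le fun n => ?_
    rw [← ENNReal.rpow_inv_le_iff hq0']
    have hpow : ∀ z, (g n z ^ (1 / q)) ^ q = g n z := fun z => by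
      rw [← ENNReal.rpow_mul, one_div, inv_mul_cancel₀ hq0.ne', ENNReal.rpow_one]
    have hIpos : 0 < ∫⁻ z, g n z ∂μ := by
      rw [lintegral_pos_iff_support (hgm n)]
      have : Function.support (g n) = Set.univ := by
        ext z; simp [(hg0 n z).ne']
      rw [this]; simp
    have hIfin : ∫⁻ z, g n z ∂μ < ⊤ := by
      calc ∫⁻ z, g n z ∂μ ≤ ∫⁻ z, ((n : ℝ≥0∞) + 1) ∂μ := lintegral_mono fun z => min_le_right _ _
        _ < ⊤ := by simp
    have hle : (∫⁻ z, h z * g n z ^ (1 / q) ∂μ) / (∫⁻ z, g n z ∂μ) ^ (1 / q) ≤ S := by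
      have hfun : (∫⁻ z, (g n z ^ (1 / q)) ^ q ∂μ) = ∫⁻ z, g n z ∂μ := by simp_rw [hpow]
      rw [hS]
      refine le_iSup_of_le (fun z => g n z ^ (1 / q)) <|
        le_iSup_of_le ((hgm n).pow_const _) <| le_iSup_of_le (by rw [hfun]; exact hIpos) <|
        le_iSup_of_le (by rw [hfun]; exact hIfin) ?_
      rw [hfun]
    refine le_trans ?_ hle
    have hlow : ∫⁻ z, g n z ∂μ ≤ ∫⁻ z, h z * g n z ^ (1 / q) ∂μ := by
      refine lintegral_mono fun z => ?_
      calc g n z = g n z ^ (1 / q') * g n z ^ (1 / q) := by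
            rw [← ENNReal.rpow_add_of_nonneg _ _ (by positivity) (by positivity), hsum,
              ENNReal.rpow_one]
        _ ≤ h z * g n z ^ (1 / q) := by
            gcongr
            rw [one_div, ENNReal.rpow_inv_le_iff hq0']
            exact min_le_left _ _
    refine le_trans ?_ (ENNReal.div_le_div_right hlow _)
    rw [ENNReal.le_div_iff_mul_le (Or.inl (ENNReal.rpow_pos hIpos hIfin.ne).ne')
      (Or.inl (ENNReal.rpow_ne_top_of_nonneg (by positivity) hIfin.ne)), ← one_div,
      ← ENNReal.rpow_add_of_nonneg _ _ (by positivity) (by positivity), hsum, ENNReal.rpow_one]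

/-- The supremum of the Harnack quotients `(Tf)(x) / ((T f^q)(y))^{1/q}` over
nonnegative measurable `f` equals the integrated Harnack quantity
`(∫ (p(x,z)/p(y,z))^{q'} p(y,z) dν(z))^{1/q'}`. -/
theorem harnack_quotient_sup_eq
    {X : Type*} [MeasurableSpace X] (ν : Measure X) [SigmaFinite ν]
    (p : X → X → ℝ) (hp_meas : Measurable (Function.uncurry p))
    (hp_pos : ∀ x y, 0 < p x y)
    (hp_symm : ∀ x y, p x y = p y x)
    (hp_cons : ∀ x, ∫⁻ y, ENNReal.ofReal (p x y) ∂ν = 1)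
    (T : (X → ℝ≥0∞) → X → ℝ≥0∞)
    (hT : ∀ f x, T f x = ∫⁻ z, ENNReal.ofReal (p x z) * f z ∂ν)
    (x y : X) (q : ℝ) (hq : 1 < q) (q' : ℝ) (hq' : q' = q / (q - 1)) :
    (⨆ (f : X → ℝ≥0∞) (_ : Measurable f)
        (_ : 0 < T (fun z => (f z) ^ q) y) (_ : T (fun z => (f z) ^ q) y < ⊤),
          T f x / (T (fun z => (f z) ^ q) y) ^ (1 / q)) =
      (∫⁻ z, (ENNReal.ofReal (p x z / p y z)) ^ q' * ENNReal.ofReal (p y z) ∂ν)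
        ^ (1 / q') := by
  have hmz : ∀ w, Measurable (p w) := fun w => hp_meas.of_uncurry_left
  have hw : Measurable fun z => ENNReal.ofReal (p y z) := (hmz y).ennreal_ofReal
  have hh : Measurable fun z => ENNReal.ofReal (p x z / p y z) :=
    ((hmz x).div (hmz y)).ennreal_ofReal
  let μ := ν.withDensity fun z => ENNReal.ofReal (p y z)
  have : IsProbabilityMeasure μ := ⟨by
    rw [withDensity_apply _ MeasurableSet.univ, Measure.restrict_univ, hp_cons]⟩
  have hqq : q.HolderConjugate q' := by
    rw [Real.holderConjugate_iff_eq_conjExponent hq]; exact hq'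
  have main := harnack_aux μ _ hh
    (fun z => ENNReal.ofReal_pos.2 (div_pos (hp_pos x z) (hp_pos y z))) q q' hqq
  have conv : ∀ F : X → ℝ≥0∞, Measurable F →
      ∫⁻ z, F z ∂μ = ∫⁻ z, ENNReal.ofReal (p y z) * F z ∂ν := fun F hF =>
    lintegral_withDensity_eq_lintegral_mul ν hw hF
  have e1 : ∫⁻ z, (ENNReal.ofReal (p x z / p y z)) ^ q' * ENNReal.ofReal (p y z) ∂ν =
      ∫⁻ z, (ENNReal.ofReal (p x z / p y z)) ^ q' ∂μ := by
    rw [conv _ (hh.pow_const q')]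
    simp_rw [mul_comm]
  rw [e1, ← main]
  refine iSup_congr fun f => iSup_congr fun hf => ?_
  have e2 : T (fun z => (f z) ^ q) y = ∫⁻ z, f z ^ q ∂μ := by
    rw [hT, conv _ (hf.pow_const q)]
  have e3 : T f x = ∫⁻ z, ENNReal.ofReal (p x z / p y z) * f z ∂μ := by
    rw [hT, conv (fun z => ENNReal.ofReal (p x z / p y z) * f z) (hh.mul hf)]
    refine lintegral_congr fun z => ?_
    rw [← mul_assoc, ← ENNReal.ofReal_mul (hp_pos y z).le, mul_div_cancel₀ _ (hp_pos y z).ne']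
  rw [e2, e3]
end

section
/- Fix two points x, y ∈ X and a constant K ≥ 0. Suppose that for every q ∈ (1,∞) with conjugate exponent q' = q/(q−1) and every measurable f : X → [0,∞], one has the Wang-type Harnack inequality ((Tf)(x))^q ≤ exp(q'·K) · (T(f^q))(y). Then for every r ∈ (1,∞), the integrated Harnack inequality (∫_X (p(x,z)/p(y,z))^{r} · p(y,z) dν(z))^{1/r} ≤ exp((r−1)·K) holds. -/
open MeasureTheory ENNReal

/-- If the Wang-type Harnack inequality `((Tf)(x))^q ≤ exp(q' K) (T f^q)(y)` holds
for all `q ∈ (1,∞)` (with `q' = q/(q-1)`) and all nonnegative measurable `f`, then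
the integrated Harnack inequality
`(∫ (p(x,z)/p(y,z))^r p(y,z) dν(z))^{1/r} ≤ exp((r-1) K)` holds for all `r ∈ (1,∞)`. -/
theorem integrated_harnack_of_wang_harnack
    {X : Type*} [MeasurableSpace X] (ν : Measure X) [SigmaFinite ν]
    (p : X → X → ℝ) (hp_meas : Measurable (Function.uncurry p))
    (hp_pos : ∀ x y, 0 < p x y)
    (hp_symm : ∀ x y, p x y = p y x)
    (hp_cons : ∀ x, ∫⁻ y, ENNReal.ofReal (p x y) ∂ν = 1)
    (T : (X → ℝ≥0∞) → X → ℝ≥0∞)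
    (hT : ∀ f x, T f x = ∫⁻ z, ENNReal.ofReal (p x z) * f z ∂ν)
    (x y : X) (K : ℝ) (hK : 0 ≤ K)
    (hWang : ∀ q : ℝ, 1 < q → ∀ f : X → ℝ≥0∞, Measurable f →
      (T f x) ^ q ≤ ENNReal.ofReal (Real.exp (q / (q - 1) * K)) *
        T (fun z => (f z) ^ q) y) :
    ∀ r : ℝ, 1 < r →
      (∫⁻ z, (ENNReal.ofReal (p x z / p y z)) ^ r * ENNReal.ofReal (p y z) ∂ν)
          ^ (1 / r) ≤ ENNReal.ofReal (Real.exp ((r - 1) * K)) := by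
  intro r hr
  have hr0 : 0 < r := by linarith
  have hr1 : 0 < r - 1 := by linarith
  have hmx : ∀ a, Measurable (fun z => p a z) := fun a =>
    hp_meas.comp (measurable_const.prodMk measurable_id)
  set g : X → ℝ≥0∞ := fun z => ENNReal.ofReal (p x z / p y z) with hg
  have hgm : Measurable g := ((hmx x).div (hmx y)).ennreal_ofReal
  have hpm : ∀ a, Measurable (fun z => ENNReal.ofReal (p a z)) := fun a => (hmx a).ennreal_ofReal
  have hgp : ∀ z, g z * ENNReal.ofReal (p y z) = ENNReal.ofReal (p x z) := by
    intro z
    rw [hg, ← ENNReal.ofReal_mul (div_pos (hp_pos _ _) (hp_pos _ _)).le,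
      div_mul_cancel₀ _ (hp_pos y z).ne']
  have hgtop : ∀ z, g z ≠ ∞ := fun z => ENNReal.ofReal_ne_top
  let h : ℕ → X → ℝ≥0∞ := fun n z => min (g z) (n : ℝ≥0∞)
  have hhm : ∀ n, Measurable (h n) := fun n => hgm.min measurable_const
  have hhtop : ∀ n z, h n z ≠ ∞ := fun n z =>
    ne_top_of_le_ne_top (ENNReal.natCast_ne_top n) (min_le_right _ _)
  set C := ENNReal.ofReal (Real.exp (r * K)) with hC
  have key : ∀ n, ∫⁻ z, (h n z) ^ r * ENNReal.ofReal (p y z) ∂ν ≤ C ^ (r - 1) := by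
    intro n
    set J := ∫⁻ z, (h n z) ^ r * ENNReal.ofReal (p y z) ∂ν with hJ
    have hJtop : J ≠ ∞ := by
      have : J ≤ ∫⁻ z, (n : ℝ≥0∞) ^ r * ENNReal.ofReal (p y z) ∂ν := by
        apply lintegral_mono
        intro z
        exact mul_le_mul' (ENNReal.rpow_le_rpow (min_le_right _ _) hr0.le) le_rfl
      refine ne_top_of_le_ne_top ?_ this
      rw [lintegral_const_mul _ (hpm y), hp_cons, mul_one]
      exact ENNReal.rpow_ne_top_of_nonneg hr0.le (ENNReal.natCast_ne_top n)
    have hq : 1 < r / (r - 1) := by rw [lt_div_iff₀ hr1]; linarith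
    have hW := hWang (r / (r - 1)) hq (fun z => (h n z) ^ (r - 1)) ((hhm n).pow_const _)
    have e1 : r / (r - 1) / (r / (r - 1) - 1) = r := by
      have : r / (r - 1) - 1 = 1 / (r - 1) := by field_simp; ring
      rw [this]; field_simp
    have e2 : (r - 1) * (r / (r - 1)) = r := by field_simp
    rw [e1, hT, hT] at hW
    have hR : ∫⁻ z, ENNReal.ofReal (p y z) * ((h n z) ^ (r - 1)) ^ (r / (r - 1)) ∂ν = J := by
      apply lintegral_congr
      intro z
      rw [← ENNReal.rpow_mul, e2, mul_comm]
    have hL : J ≤ ∫⁻ z, ENNReal.ofReal (p x z) * (h n z) ^ (r - 1) ∂ν := by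
      apply lintegral_mono
      intro z
      have : (h n z) ^ r = h n z * (h n z) ^ (r - 1) := by
        conv_lhs => rw [show r = 1 + (r - 1) by ring]
        rw [ENNReal.rpow_add_of_nonneg _ _ zero_le_one hr1.le, ENNReal.rpow_one]
      show (h n z) ^ r * _ ≤ ENNReal.ofReal (p x z) * (h n z) ^ (r - 1)
      rw [this, ← hgp z, mul_right_comm]
      gcongr
      exact min_le_left _ _
    have hW2 : J ^ (r / (r - 1)) ≤ C * J :=
      (ENNReal.rpow_le_rpow hL (by positivity)).trans (by rw [← hR]; exact hW)
    by_cases hJ0 : J = 0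
    · rw [hJ0]; exact zero_le
    have e3 : r / (r - 1) = 1 / (r - 1) + 1 := by field_simp; ring
    rw [e3, ENNReal.rpow_add _ _ hJ0 hJtop, ENNReal.rpow_one,
      ENNReal.mul_le_mul_iff_left hJ0 hJtop] at hW2
    have := ENNReal.rpow_le_rpow hW2 hr1.le
    rwa [← ENNReal.rpow_mul, one_div_mul_cancel hr1.ne', ENNReal.rpow_one] at this
  have hlim : Filter.Tendsto (fun n => ∫⁻ z, (h n z) ^ r * ENNReal.ofReal (p y z) ∂ν) Filter.atTop
      (nhds (∫⁻ z, (g z) ^ r * ENNReal.ofReal (p y z) ∂ν)) := by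
    apply lintegral_tendsto_of_tendsto_of_monotone
    · intro n
      exact (((hhm n).pow_const _).mul (hpm y)).aemeasurable
    · refine Filter.Eventually.of_forall fun z a b hab => ?_
      refine mul_le_mul' (ENNReal.rpow_le_rpow ?_ hr0.le) le_rfl
      exact min_le_min le_rfl (by exact_mod_cast hab)
    · refine Filter.Eventually.of_forall fun z => ?_
      obtain ⟨N, hN⟩ := ENNReal.exists_nat_gt (hgtop z)
      refine tendsto_const_nhds.congr' ?_
      filter_upwards [Filter.eventually_ge_atTop N] with n hn
      have : h n z = g z := min_eq_left (hN.le.trans (by exact_mod_cast hn))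
      rw [this]
  have hI := le_of_tendsto' hlim key
  refine (ENNReal.rpow_le_rpow hI (by positivity)).trans (le_of_eq ?_)
  rw [← ENNReal.rpow_mul, hC, ENNReal.ofReal_rpow_of_pos (Real.exp_pos _), ← Real.exp_mul]
  congr 2
  field_simp
end
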